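/- (Polynomial decay, general order) There exists a constant C > 0, depending only on L, η, β, κ, τ, m, δ and p, such that for every natural number k, every smooth solution (u, θ, q) of the thermoviscoelastic system with second sound satisfying boundary conditions (D), and every t > 0, one has E⁽ᵏ⁾(t) ≤ C (E⁽ᵏ⁾(0) + E⁽ᵏ⁺¹⁾(0)) / t. -/

import Mathlib

open MeasureTheory Set intervalIntegral

noncomputable section

/-- Time derivative of a function of `(x, t)` (curried as `x ↦ t ↦ f x t`). -/
def pdt (f : ℝ → ℝ → ℝ) : ℝ → ℝ → ℝ := fun x t => deriv (f x) t

/-- Space derivative of a function of `(x, t)`. -/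
def pdx (f : ℝ → ℝ → ℝ) : ℝ → ℝ → ℝ := fun x t => deriv (fun y => f y t) x

/-- A smooth solution of the thermoviscoelastic system with second sound:
`u, θ, q` are `C^∞` and the three PDEs hold on `(0, L) × (0, ∞)`. -/
def IsSmoothSol (L η β κ τ : ℝ) (m δ p : ℝ → ℝ) (u θ q : ℝ → ℝ → ℝ) : Prop :=
  ContDiff ℝ (⊤ : ℕ∞) (Function.uncurry u) ∧ ContDiff ℝ (⊤ : ℕ∞) (Function.uncurry θ) ∧
    ContDiff ℝ (⊤ : ℕ∞) (Function.uncurry q) ∧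
    ∀ x ∈ Ioo (0 : ℝ) L, ∀ t : ℝ, 0 < t →
      (m x * pdt (pdt u) x t
          - pdx (fun y s => p y * pdx u y s + 2 * δ y * pdt (pdx u) y s) x t
          + η * pdx θ x t = 0) ∧
      (pdt θ x t + κ * pdx q x t + η * pdt (pdx u) x t = 0) ∧
      (τ * pdt q x t + β * q x t + κ * pdx θ x t = 0)

/-- Boundary conditions (D): clamped structure, temperature zero at both ends. -/
def BCD (L : ℝ) (u θ : ℝ → ℝ → ℝ) : Prop :=
  ∀ t : ℝ, 0 ≤ t → u 0 t = 0 ∧ u L t = 0 ∧ θ 0 t = 0 ∧ θ L t = 0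

/-- `k`-th time derivative of a function of `(x, t)`. -/
def pdtn (k : ℕ) (f : ℝ → ℝ → ℝ) : ℝ → ℝ → ℝ := fun x t => iteratedDeriv k (f x) t

/-- The `k`-th order energy `E⁽ᵏ⁾`; `E⁽⁰⁾ = E₁`, `E⁽¹⁾ = E₂`. -/
def energyN (k : ℕ) (L τ : ℝ) (m p : ℝ → ℝ) (u θ q : ℝ → ℝ → ℝ) (t : ℝ) : ℝ :=
  (1 / 2) * ((∫ x in (0 : ℝ)..L, p x * (pdtn k (pdx u) x t) ^ 2)
    + (∫ x in (0 : ℝ)..L, m x * (pdtn k (pdt u) x t) ^ 2)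
    + (∫ x in (0 : ℝ)..L, (pdtn k θ x t) ^ 2)
    + τ * ∫ x in (0 : ℝ)..L, (pdtn k q x t) ^ 2)

/-- Joint smoothness of a curried function. -/
def Sm (f : ℝ → ℝ → ℝ) : Prop := ContDiff ℝ (⊤ : ℕ∞) (Function.uncurry f)

lemma Sm.hasDt {f : ℝ → ℝ → ℝ} (hf : Sm f) (x t : ℝ) :
    HasDerivAt (f x) (fderiv ℝ (Function.uncurry f) (x, t) (0, 1)) t := by
  have h1 : HasFDerivAt (Function.uncurry f) (fderiv ℝ (Function.uncurry f) (x, t)) (x, t) :=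
    (hf.differentiable (by simp)).differentiableAt.hasFDerivAt
  have h2 : HasDerivAt (fun s : ℝ => ((x, s) : ℝ × ℝ)) (0, 1) t :=
    (hasDerivAt_const t x).prodMk (hasDerivAt_id t)
  exact h1.comp_hasDerivAt t h2

lemma Sm.hasDx {f : ℝ → ℝ → ℝ} (hf : Sm f) (x t : ℝ) :
    HasDerivAt (fun y => f y t) (fderiv ℝ (Function.uncurry f) (x, t) (1, 0)) x := by
  have h1 : HasFDerivAt (Function.uncurry f) (fderiv ℝ (Function.uncurry f) (x, t)) (x, t) :=
    (hf.differentiable (by simp)).differentiableAt.hasFDerivAt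
  have h2 : HasDerivAt (fun s : ℝ => ((s, t) : ℝ × ℝ)) (1, 0) x :=
    (hasDerivAt_id x).prodMk (hasDerivAt_const x t)
  exact h1.comp_hasDerivAt x h2

lemma Sm.pdt_eq {f : ℝ → ℝ → ℝ} (hf : Sm f) (x t : ℝ) :
    pdt f x t = fderiv ℝ (Function.uncurry f) (x, t) (0, 1) := (hf.hasDt x t).deriv

lemma Sm.pdx_eq {f : ℝ → ℝ → ℝ} (hf : Sm f) (x t : ℝ) :
    pdx f x t = fderiv ℝ (Function.uncurry f) (x, t) (1, 0) := (hf.hasDx x t).deriv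

lemma Sm.dt {f : ℝ → ℝ → ℝ} (hf : Sm f) (x t : ℝ) : HasDerivAt (f x) (pdt f x t) t := by
  rw [hf.pdt_eq]; exact hf.hasDt x t

lemma Sm.dx {f : ℝ → ℝ → ℝ} (hf : Sm f) (x t : ℝ) :
    HasDerivAt (fun y => f y t) (pdx f x t) x := by
  rw [hf.pdx_eq]; exact hf.hasDx x t

lemma Sm.fderiv_apply {f : ℝ → ℝ → ℝ} (hf : Sm f) (v : ℝ × ℝ) :
    ContDiff ℝ (⊤ : ℕ∞) (fun z => fderiv ℝ (Function.uncurry f) z v) := by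
  have h : ContDiff ℝ (⊤ : ℕ∞) (fderiv ℝ (Function.uncurry f)) :=
    hf.fderiv_right (by simp)
  exact h.clm_apply contDiff_const

lemma Sm.pdt {f : ℝ → ℝ → ℝ} (hf : Sm f) : Sm (pdt f) := by
  have h := hf.fderiv_apply (0, 1)
  have e : Function.uncurry (_root_.pdt f) =
      fun z => fderiv ℝ (Function.uncurry f) z (0, 1) := by
    funext ⟨x, t⟩; exact hf.pdt_eq x t
  unfold Sm; rw [e]; exact h

lemma Sm.pdx {f : ℝ → ℝ → ℝ} (hf : Sm f) : Sm (pdx f) := by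
  have h := hf.fderiv_apply (1, 0)
  have e : Function.uncurry (_root_.pdx f) =
      fun z => fderiv ℝ (Function.uncurry f) z (1, 0) := by
    funext ⟨x, t⟩; exact hf.pdx_eq x t
  unfold Sm; rw [e]; exact h

lemma Sm.mul {f g : ℝ → ℝ → ℝ} (hf : Sm f) (hg : Sm g) : Sm (fun x t => f x t * g x t) :=
  ContDiff.mul (f := Function.uncurry f) (g := Function.uncurry g) hf hg

lemma Sm.add {f g : ℝ → ℝ → ℝ} (hf : Sm f) (hg : Sm g) : Sm (fun x t => f x t + g x t) :=
  ContDiff.add (f := Function.uncurry f) (g := Function.uncurry g) hf hg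

lemma Sm.cmul {f : ℝ → ℝ → ℝ} (c : ℝ) (hf : Sm f) : Sm (fun x t => c * f x t) :=
  ContDiff.mul (f := fun _ => c) (g := Function.uncurry f) contDiff_const hf

lemma Sm.slice {f : ℝ → ℝ → ℝ} (hf : Sm f) (t : ℝ) : ContDiff ℝ (⊤ : ℕ∞) (fun x => f x t) :=
  ContDiff.comp (g := Function.uncurry f) (f := fun x : ℝ => (x, t)) hf
    (contDiff_id.prodMk contDiff_const)

lemma Sm.cont {f : ℝ → ℝ → ℝ} (hf : Sm f) (t : ℝ) : Continuous (fun x => f x t) :=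
  (hf.slice t).continuous

lemma Sm.ofx {g : ℝ → ℝ} (hg : ContDiff ℝ (⊤ : ℕ∞) g) : Sm (fun x _ => g x) :=
  ContDiff.comp (g := g) (f := fun z : ℝ × ℝ => z.1) hg contDiff_fst

lemma fderiv_slice {f : ℝ → ℝ → ℝ} (hf : Sm f) (z v w : ℝ × ℝ) {c : ℝ → ℝ × ℝ} {s : ℝ}
    (hc : HasDerivAt c w s) (hz : c s = z) :
    HasDerivAt (fun r => fderiv ℝ (Function.uncurry f) (c r) v)
      (fderiv ℝ (fderiv ℝ (Function.uncurry f)) z w v) s := by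
  have h : ContDiff ℝ (⊤ : ℕ∞) (fderiv ℝ (Function.uncurry f)) :=
    hf.fderiv_right (by simp)
  subst hz
  have h1 : HasFDerivAt (fderiv ℝ (Function.uncurry f))
      (fderiv ℝ (fderiv ℝ (Function.uncurry f)) (c s)) (c s) :=
    (h.differentiable (by simp)).differentiableAt.hasFDerivAt
  exact (ContinuousLinearMap.apply ℝ ℝ v).hasFDerivAt.comp_hasDerivAt s (h1.comp_hasDerivAt s hc)

lemma Sm.symm {f : ℝ → ℝ → ℝ} (hf : Sm f) (z : ℝ × ℝ) :
    IsSymmSndFDerivAt ℝ (Function.uncurry f) z := by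
  have h : ContDiffAt ℝ (⊤ : ℕ∞) (Function.uncurry f) z := ContDiff.contDiffAt hf
  have h2 : ContDiffAt ℝ 2 (Function.uncurry f) z := h.of_le (WithTop.coe_le_coe.2 (le_top : (2 : ℕ∞) ≤ ⊤))
  exact h2.isSymmSndFDerivAt (by rw [minSmoothness_of_isRCLikeNormedField])

lemma Sm.comm {f : ℝ → ℝ → ℝ} (hf : Sm f) :
    _root_.pdt (_root_.pdx f) = _root_.pdx (_root_.pdt f) := by
  funext x t
  have a2 : HasDerivAt (fun s : ℝ => ((x, s) : ℝ × ℝ)) (0, 1) t :=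
    (hasDerivAt_const t x).prodMk (hasDerivAt_id t)
  have b2 : HasDerivAt (fun s : ℝ => ((s, t) : ℝ × ℝ)) (1, 0) x :=
    (hasDerivAt_id x).prodMk (hasDerivAt_const x t)
  have a3 := fderiv_slice hf (x, t) (1, 0) (0, 1) a2 rfl
  have b3 := fderiv_slice hf (x, t) (0, 1) (1, 0) b2 rfl
  have e1 : _root_.pdx f x = fun s => fderiv ℝ (Function.uncurry f) (x, s) (1, 0) := by
    funext s; exact hf.pdx_eq x s
  have e2 : (fun y => _root_.pdt f y t) = fun y => fderiv ℝ (Function.uncurry f) (y, t) (0, 1) := by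
    funext s; exact hf.pdt_eq s t
  have h1 : _root_.pdt (_root_.pdx f) x t = deriv (_root_.pdx f x) t := rfl
  have h2 : _root_.pdx (_root_.pdt f) x t = deriv (fun y => _root_.pdt f y t) x := rfl
  rw [h1, h2, e1, e2, a3.deriv, b3.deriv]
  exact hf.symm (x, t) _ _

lemma pdtn_succ (k : ℕ) (f : ℝ → ℝ → ℝ) : pdtn (k + 1) f = pdt (pdtn k f) := by
  funext x t; simp only [pdtn, pdt, iteratedDeriv_succ]; rfl

lemma pdtn_zero (f : ℝ → ℝ → ℝ) : pdtn 0 f = f := by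
  funext x t; simp [pdtn]

lemma Sm.pdtn {f : ℝ → ℝ → ℝ} (hf : Sm f) (k : ℕ) : Sm (pdtn k f) := by
  induction k with
  | zero => rwa [pdtn_zero]
  | succ k ih => rw [pdtn_succ]; exact ih.pdt

lemma pdtn_pdt (f : ℝ → ℝ → ℝ) (k : ℕ) :
    pdtn k (pdt f) = pdt (pdtn k f) := by
  induction k with
  | zero => simp [pdtn_zero]
  | succ k ih => rw [pdtn_succ, ih, pdtn_succ]

lemma Sm.pdtn_pdx {f : ℝ → ℝ → ℝ} (hf : Sm f) (k : ℕ) :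
    _root_.pdtn k (_root_.pdx f) = _root_.pdx (_root_.pdtn k f) := by
  induction k with
  | zero => simp [pdtn_zero]
  | succ k ih => rw [pdtn_succ, ih, pdtn_succ, (hf.pdtn k).comm]

/-- Weighted integral. -/
def J (L : ℝ) (w f : ℝ → ℝ) : ℝ := ∫ x in (0 : ℝ)..L, w x * f x

lemma J_int {L : ℝ} (hL : 0 < L) {w f : ℝ → ℝ} (hw : ContinuousOn w (Icc 0 L))
    (hf : Continuous f) : IntervalIntegrable (fun x => w x * f x) volume 0 L := by
  apply ContinuousOn.intervalIntegrable
  rw [uIcc_of_le hL.le]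
  exact hw.mul hf.continuousOn

lemma J_add {L : ℝ} (hL : 0 < L) {w f g : ℝ → ℝ} (hw : ContinuousOn w (Icc 0 L))
    (hf : Continuous f) (hg : Continuous g) :
    J L w (fun x => f x + g x) = J L w f + J L w g := by
  unfold J
  rw [← intervalIntegral.integral_add (J_int hL hw hf) (J_int hL hw hg)]
  congr 1; funext x; ring

lemma J_smul {L : ℝ} (c : ℝ) {w f : ℝ → ℝ} :
    J L w (fun x => c * f x) = c * J L w f := by
  unfold J
  rw [← intervalIntegral.integral_const_mul]
  congr 1; funext x; ring

lemma J_mono {L : ℝ} (hL : 0 < L) {w v f g : ℝ → ℝ} (hw : ContinuousOn w (Icc 0 L))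
    (hv : ContinuousOn v (Icc 0 L))
    (hf : Continuous f) (hg : Continuous g) (h : ∀ x ∈ Icc 0 L, w x * f x ≤ v x * g x) :
    J L w f ≤ J L v g :=
  intervalIntegral.integral_mono_on hL.le (J_int hL hw hf) (J_int hL hv hg) h

lemma J_congr {L : ℝ} (hL : 0 < L) {w f g : ℝ → ℝ}
    (h : ∀ x ∈ Ioo 0 L, f x = g x) : J L w f = J L w g := by
  unfold J
  apply intervalIntegral.integral_congr_ae
  have : ∀ᵐ x : ℝ, x ≠ L := by
    simp [ae_iff]
  filter_upwards [this] with x hx hx2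
  rw [uIoc_of_le hL.le] at hx2
  rw [h x ⟨hx2.1, lt_of_le_of_ne hx2.2 hx⟩]

lemma J_deriv {L : ℝ} (hL : 0 < L) {w : ℝ → ℝ} {f : ℝ → ℝ → ℝ} (hw : ContinuousOn w (Icc 0 L))
    (hf : Sm f) (t : ℝ) :
    HasDerivAt (fun s => J L w (fun x => f x s)) (J L w (fun x => pdt f x t)) t := by
  have hK : IsCompact (Icc (0 : ℝ) L ×ˢ Icc (t - 1) (t + 1)) := isCompact_Icc.prod isCompact_Icc
  obtain ⟨C, hC⟩ := hK.exists_bound_of_continuousOn (f := Function.uncurry (pdt f))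
    (ContDiff.continuous hf.pdt).continuousOn
  obtain ⟨D, hD⟩ := (isCompact_Icc (a := (0 : ℝ)) (b := L)).exists_bound_of_continuousOn hw
  have hmeas : ∀ g : ℝ → ℝ, Continuous g →
      AEStronglyMeasurable (fun x => w x * g x) (volume.restrict (uIoc 0 L)) := by
    intro g hg
    exact (J_int hL hw hg).def'.aestronglyMeasurable
  refine (intervalIntegral.hasDerivAt_integral_of_dominated_loc_of_deriv_le
    (F := fun s x => w x * f x s) (F' := fun s x => w x * pdt f x s)
    (s := Icc (t - 1) (t + 1)) (bound := fun _ => D * C)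
    (Icc_mem_nhds (by linarith) (by linarith)) (Filter.Eventually.of_forall fun s => hmeas _ (hf.cont s))
    (J_int hL hw (hf.cont t)) (hmeas _ (hf.pdt.cont t)) ?_ ?_ ?_).2
  · refine Filter.Eventually.of_forall fun x hx s hs => ?_
    rw [uIoc_of_le hL.le] at hx
    have hx' : x ∈ Icc 0 L := ⟨hx.1.le, hx.2⟩
    rw [norm_mul]
    have h1 := hC (x, s) ⟨hx', hs⟩
    have h2 := hD x hx'
    exact mul_le_mul h2 h1 (norm_nonneg _) ((norm_nonneg _).trans h2)
  · exact intervalIntegrable_const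
  · exact Filter.Eventually.of_forall fun x hx s hs => (hf.dt x s).const_mul (w x)

lemma pdt_mul {f g : ℝ → ℝ → ℝ} (hf : Sm f) (hg : Sm g) (x t : ℝ) :
    pdt (fun x t => f x t * g x t) x t = pdt f x t * g x t + f x t * pdt g x t :=
  ((hf.dt x t).mul (hg.dt x t)).deriv

/-- integral of a derivative vanishing at the ends -/
lemma J_dx {L : ℝ} {F F' : ℝ → ℝ} (h : ∀ x, HasDerivAt F (F' x) x)
    (hc : Continuous F') (h0 : F 0 = 0) (h1 : F L = 0) : J L (fun _ => 1) F' = 0 := by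
  unfold J
  simp only [one_mul]
  rw [intervalIntegral.integral_eq_sub_of_hasDerivAt (fun x _ => h x) (hc.intervalIntegrable _ _), h0, h1,
    sub_zero]

lemma poincare {L : ℝ} (hL : 0 < L) {f f' : ℝ → ℝ} (h : ∀ x, HasDerivAt f (f' x) x)
    (hf : Continuous f) (hc : Continuous f') (h0 : f 0 = 0) :
    J L (fun _ => 1) (fun x => f x ^ 2) ≤ 4 * L ^ 2 * J L (fun _ => 1) (fun x => f' x ^ 2) := by
  have w1 : ContinuousOn (fun _ : ℝ => (1 : ℝ)) (Icc 0 L) := continuousOn_const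
  have e := J_dx (L := L) (F := fun x => (x - L) * f x ^ 2)
    (F' := fun x => f x ^ 2 + (x - L) * (2 * f x * f' x)) (fun x => by
      refine (((hasDerivAt_id x).sub_const L).mul ((h x).pow 2)).congr_deriv ?_
      simp only [id]; norm_num) (by fun_prop) (by simp [h0]) (by simp)
  have m : J L (fun _ => 1) (fun x => f x ^ 2) ≤ J L (fun _ => 1) (fun x =>
      2 * (f x ^ 2 + (x - L) * (2 * f x * f' x)) + (4 * L ^ 2) * f' x ^ 2) := by
    apply J_mono hL w1 w1 (by fun_prop) (by fun_prop)
    intro x hx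
    have : (L - x) ^ 2 ≤ L ^ 2 := by
      apply pow_le_pow_left₀ <;> linarith [hx.1, hx.2]
    nlinarith [sq_nonneg (f x - 2 * (L - x) * f' x), mul_nonneg (sub_nonneg.2 this) (sq_nonneg (f' x))]
  rw [J_add hL w1 (by fun_prop) (by fun_prop), J_smul, J_smul, e] at m
  linarith

/-- Weak formulation of the problem, stable under time differentiation. -/
structure WS (L η β κ τ : ℝ) (m δ p : ℝ → ℝ) (u θ q : ℝ → ℝ → ℝ) : Prop where
  su : Sm u
  sθ : Sm θ
  sq : Sm q
  weak : ∀ t : ℝ, 0 < t → ∀ φ : ℝ → ℝ, ContDiff ℝ (⊤ : ℕ∞) φ → φ 0 = 0 → φ L = 0 →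
    J L m (fun x => pdt (pdt u) x t * φ x) + J L p (fun x => pdx u x t * deriv φ x)
      + 2 * J L δ (fun x => pdt (pdx u) x t * deriv φ x)
      + η * J L (fun _ => 1) (fun x => pdx θ x t * φ x) = 0
  e2 : ∀ x ∈ Ioo (0 : ℝ) L, ∀ t : ℝ, 0 < t →
    pdt θ x t + κ * pdx q x t + η * pdt (pdx u) x t = 0
  e3 : ∀ x ∈ Ioo (0 : ℝ) L, ∀ t : ℝ, 0 < t →
    τ * pdt q x t + β * q x t + κ * pdx θ x t = 0
  bc : BCD L u θ

lemma pdt_zero_of {f : ℝ → ℝ → ℝ} (hf : Sm f) {x : ℝ} (h : ∀ t, 0 ≤ t → f x t = 0) :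
    ∀ t, 0 ≤ t → pdt f x t = 0 := by
  intro t ht
  have h1 : HasDerivWithinAt (f x) (pdt f x t) (Ici 0) t := (hf.dt x t).hasDerivWithinAt
  have h2 : HasDerivWithinAt (f x) 0 (Ici 0) t :=
    (hasDerivWithinAt_const t (Ici 0) (0 : ℝ)).congr (fun s hs => h s hs) (h t ht)
  exact (uniqueDiffOn_Ici (0 : ℝ) t ht).eq_deriv _ h1 h2

lemma zero_deriv_of {f : ℝ → ℝ} {f' t : ℝ} (ht : 0 < t) (h : ∀ s, 0 < s → f s = 0)
    (hd : HasDerivAt f f' t) : f' = 0 := by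
  have : f =ᶠ[nhds t] fun _ => 0 := by
    filter_upwards [lt_mem_nhds ht] with s hs using h s hs
  exact hd.unique ((hasDerivAt_const t (0 : ℝ)).congr_of_eventuallyEq this)

lemma WS.dt {L η β κ τ : ℝ} {m δ p : ℝ → ℝ} {u θ q : ℝ → ℝ → ℝ} (hL : 0 < L)
    (hm : ContinuousOn m (Icc 0 L)) (hδ : ContinuousOn δ (Icc 0 L)) (hp : ContinuousOn p (Icc 0 L))
    (h : WS L η β κ τ m δ p u θ q) : WS L η β κ τ m δ p (pdt u) (pdt θ) (pdt q) where
  su := h.su.pdt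
  sθ := h.sθ.pdt
  sq := h.sq.pdt
  weak := by
    intro t ht φ hφ h0 h1
    have w1 : ContinuousOn (fun _ : ℝ => (1 : ℝ)) (Icc 0 L) := continuousOn_const
    have hφ' : ContDiff ℝ (⊤ : ℕ∞) (deriv φ) := ContDiff.iterate_deriv 1 hφ
    have key : ∀ (w : ℝ → ℝ) (f : ℝ → ℝ → ℝ) (ψ : ℝ → ℝ), ContinuousOn w (Icc 0 L) → Sm f →
        ContDiff ℝ (⊤ : ℕ∞) ψ → HasDerivAt (fun s => J L w (fun x => f x s * ψ x))
          (J L w (fun x => pdt f x t * ψ x)) t := by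
      intro w f ψ hw hf hψ
      have := J_deriv hL hw (hf.mul (Sm.ofx hψ)) t
      convert this using 3 with x
      exact (((hf.dt x t).mul_const (ψ x)).deriv).symm
    have D := (((key m _ φ hm h.su.pdt.pdt hφ).add (key p _ _ hp h.su.pdx hφ')).add
      ((key δ _ _ hδ h.su.pdx.pdt hφ').const_mul 2)).add
      ((key _ _ _ w1 h.sθ.pdx hφ).const_mul η)
    have := zero_deriv_of ht (fun s hs => h.weak s hs φ hφ h0 h1) D
    rw [← h.su.comm, ← h.sθ.comm]
    exact this
  e2 := by
    intro x hx t ht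
    have := zero_deriv_of ht (fun s hs => h.e2 x hx s hs)
      (((h.sθ.pdt.dt x t).add ((h.sq.pdx.dt x t).const_mul κ)).add
        ((h.su.pdx.pdt.dt x t).const_mul η))
    rw [← h.su.comm, ← h.sq.comm]
    exact this
  e3 := by
    intro x hx t ht
    have := zero_deriv_of ht (fun s hs => h.e3 x hx s hs)
      (((h.sq.pdt.dt x t).const_mul τ |>.add ((h.sq.dt x t).const_mul β)).add
        ((h.sθ.pdx.dt x t).const_mul κ))
    rw [← h.sθ.comm]
    exact this
  bc := fun t ht => ⟨pdt_zero_of h.su (fun s hs => (h.bc s hs).1) t ht,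
    pdt_zero_of h.su (fun s hs => (h.bc s hs).2.1) t ht,
    pdt_zero_of h.sθ (fun s hs => (h.bc s hs).2.2.1) t ht,
    pdt_zero_of h.sθ (fun s hs => (h.bc s hs).2.2.2) t ht⟩

lemma ac_of_smooth {L : ℝ} {f : ℝ → ℝ} (hf : ContDiff ℝ (⊤ : ℕ∞) f) :
    AbsolutelyContinuousOnInterval f 0 L := by
  obtain ⟨K, hK⟩ := (hf.contDiffOn (s := uIcc 0 L)).exists_lipschitzOnWith (by simp)
    (convex_uIcc 0 L) isCompact_uIcc
  exact hK.absolutelyContinuousOnInterval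

lemma WS.of_sol {L η β κ τ : ℝ} {m δ p : ℝ → ℝ} {u θ q : ℝ → ℝ → ℝ} (hL : 0 < L)
    (hmLip : ∃ K, LipschitzOnWith K m (Icc 0 L))
    (hδLip : ∃ K, LipschitzOnWith K δ (Icc 0 L))
    (hpLip : ∃ K, LipschitzOnWith K p (Icc 0 L))
    (h : IsSmoothSol L η β κ τ m δ p u θ q) (hb : BCD L u θ) : WS L η β κ τ m δ p u θ q := by
  obtain ⟨hu, hθ, hq, heq⟩ := h
  have su : Sm u := hu
  have sθ : Sm θ := hθ
  have sq : Sm q := hq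
  refine ⟨hu, hθ, hq, ?_, fun x hx t ht => (heq x hx t ht).2.1, fun x hx t ht => (heq x hx t ht).2.2, hb⟩
  intro t ht φ hφ h0 h1
  obtain ⟨Km, hKm⟩ := hmLip
  obtain ⟨Kδ, hKδ⟩ := hδLip
  obtain ⟨Kp, hKp⟩ := hpLip
  have hm := hKm.continuousOn
  have hδ := hKδ.continuousOn
  have hp := hKp.continuousOn
  have w1 : ContinuousOn (fun _ : ℝ => (1 : ℝ)) (Icc 0 L) := continuousOn_const
  have hφ' : ContDiff ℝ (⊤ : ℕ∞) (deriv φ) := ContDiff.iterate_deriv 1 hφ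
  have cφ := hφ.continuous
  have cφ' := hφ'.continuous
  rw [← uIcc_of_le hL.le] at hKδ hKp
  have acp := hKp.absolutelyContinuousOnInterval
  have acδ := hKδ.absolutelyContinuousOnInterval
  have acF : AbsolutelyContinuousOnInterval
      (fun y => p y * pdx u y t + 2 * δ y * pdt (pdx u) y t) 0 L :=
    (acp.fun_mul (ac_of_smooth (su.pdx.slice t))).fun_add
      ((acδ.const_mul 2).fun_mul (ac_of_smooth (su.pdx.pdt.slice t)))
  have ibp := acF.integral_mul_deriv_eq_deriv_mul (ac_of_smooth hφ)
  rw [h0, h1] at ibp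
  have e1 : (∫ x in (0 : ℝ)..L, (p x * pdx u x t + 2 * δ x * pdt (pdx u) x t) * deriv φ x)
      = J L p (fun x => pdx u x t * deriv φ x)
      + 2 * J L δ (fun x => pdt (pdx u) x t * deriv φ x) := by
    have c1 := su.pdx.cont t
    have c2 := su.pdx.pdt.cont t
    unfold J
    rw [← intervalIntegral.integral_const_mul, ← intervalIntegral.integral_add
      (J_int hL hp (by fun_prop)) ((J_int hL hδ (by fun_prop)).const_mul 2)]
    congr 1; funext x; ring
  have e2 : (∫ x in (0 : ℝ)..L,
      deriv (fun y => p y * pdx u y t + 2 * δ y * pdt (pdx u) y t) x * φ x)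
      = J L m (fun x => pdt (pdt u) x t * φ x) + η * J L (fun _ => 1) (fun x => pdx θ x t * φ x) := by
    have c1 := su.pdt.pdt.cont t
    have c2 := sθ.pdx.cont t
    unfold J
    rw [← intervalIntegral.integral_const_mul, ← intervalIntegral.integral_add
      (J_int hL hm (by fun_prop)) ((J_int hL w1 (by fun_prop)).const_mul η)]
    have := J_congr (w := fun _ => 1) hL (f := fun x => deriv (fun y => p y * pdx u y t + 2 * δ y * pdt (pdx u) y t) x * φ x)
      (g := fun x => m x * (pdt (pdt u) x t * φ x) + η * (1 * (pdx θ x t * φ x))) (by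
        intro x hx
        have := (heq x hx t ht).1
        have e : pdx (fun y s => p y * pdx u y s + 2 * δ y * pdt (pdx u) y s) x t =
          deriv (fun y => p y * pdx u y t + 2 * δ y * pdt (pdx u) y t) x := rfl
        rw [e] at this
        linear_combination (-φ x) * this)
    unfold J at this
    simpa only [one_mul] using this
  rw [e1, e2] at ibp
  linarith

lemma WS.pdtn {L η β κ τ : ℝ} {m δ p : ℝ → ℝ} {u θ q : ℝ → ℝ → ℝ} (hL : 0 < L)
    (hm : ContinuousOn m (Icc 0 L)) (hδ : ContinuousOn δ (Icc 0 L)) (hp : ContinuousOn p (Icc 0 L))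
    (h : WS L η β κ τ m δ p u θ q) (k : ℕ) :
    WS L η β κ τ m δ p (pdtn k u) (pdtn k θ) (pdtn k q) := by
  induction k with
  | zero => simpa only [pdtn_zero] using h
  | succ k ih => simpa only [pdtn_succ] using ih.dt hL hm hδ hp

/-- Energy in terms of weighted integrals. -/
def En (L τ : ℝ) (m p : ℝ → ℝ) (u θ q : ℝ → ℝ → ℝ) (t : ℝ) : ℝ :=
  (1 / 2) * (J L p (fun x => pdx u x t ^ 2) + J L m (fun x => pdt u x t ^ 2)
    + J L (fun _ => 1) (fun x => θ x t ^ 2) + τ * J L (fun _ => 1) (fun x => q x t ^ 2))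

/-- Dissipation. -/
def Di (L β : ℝ) (δ : ℝ → ℝ) (u q : ℝ → ℝ → ℝ) (t : ℝ) : ℝ :=
  2 * J L δ (fun x => pdt (pdx u) x t ^ 2) + β * J L (fun _ => 1) (fun x => q x t ^ 2)

/-- Multiplier functional. -/
def Gf (L : ℝ) (m δ : ℝ → ℝ) (u : ℝ → ℝ → ℝ) (t : ℝ) : ℝ :=
  J L m (fun x => pdt u x t * u x t) + J L δ (fun x => pdx u x t ^ 2)

lemma energyN_eq {L τ : ℝ} {m p : ℝ → ℝ} {u θ q : ℝ → ℝ → ℝ} (hu : Sm u) (k : ℕ) (t : ℝ) :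
    energyN k L τ m p u θ q t = En L τ m p (pdtn k u) (pdtn k θ) (pdtn k q) t := by
  simp only [energyN, En, J, one_mul, hu.pdtn_pdx, pdtn_pdt]

lemma J_sq_deriv {L : ℝ} (hL : 0 < L) {w : ℝ → ℝ} {f : ℝ → ℝ → ℝ} (hw : ContinuousOn w (Icc 0 L))
    (hf : Sm f) (t : ℝ) :
    HasDerivAt (fun s => J L w (fun x => f x s ^ 2)) (2 * J L w (fun x => f x t * pdt f x t)) t := by
  have := J_deriv hL hw (hf.mul hf) t
  rw [← J_smul]
  simp only [pdt_mul hf hf] at this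
  have e : (fun s => J L w (fun x => f x s ^ 2)) = fun s => J L w (fun x => f x s * f x s) := by
    funext s; congr 1; funext x; ring
  rw [e]
  refine this.congr_deriv ?_
  congr 1; funext x; ring

lemma En_deriv {L η β κ τ : ℝ} {m δ p : ℝ → ℝ} {u θ q : ℝ → ℝ → ℝ} (hL : 0 < L)
    (hm : ContinuousOn m (Icc 0 L)) (hδ : ContinuousOn δ (Icc 0 L)) (hp : ContinuousOn p (Icc 0 L))
    (h : WS L η β κ τ m δ p u θ q) :
    (∀ t, 0 < t → HasDerivAt (En L τ m p u θ q) (-Di L β δ u q t) t) ∧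
      Continuous (En L τ m p u θ q) := by
  have w1 : ContinuousOn (fun _ : ℝ => (1 : ℝ)) (Icc 0 L) := continuousOn_const
  have D : ∀ t, HasDerivAt (En L τ m p u θ q) _ t := fun t =>
    ((((J_sq_deriv hL hp h.su.pdx t).add (J_sq_deriv hL hm h.su.pdt t)).add
      (J_sq_deriv hL w1 h.sθ t)).add ((J_sq_deriv hL w1 h.sq t).const_mul τ)).const_mul (1 / 2)
  refine ⟨fun t ht => (D t).congr_deriv ?_, continuous_iff_continuousAt.2 fun t => (D t).continuousAt⟩
  have cθ := h.sθ.cont t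
  have cq := h.sq.cont t
  have cqx := h.sq.pdx.cont t
  have cut := h.su.pdt.cont t
  have cθx := h.sθ.pdx.cont t
  have cutx := h.su.pdt.pdx.cont t
  have d1 : deriv (fun x => pdt u x t) = fun x => pdt (pdx u) x t := by
    funext x; rw [h.su.comm]; rfl
  have b := h.bc t ht.le
  have W := h.weak t ht (fun x => pdt u x t) (h.su.pdt.slice t)
    (pdt_zero_of h.su (fun s hs => (h.bc s hs).1) t ht.le)
    (pdt_zero_of h.su (fun s hs => (h.bc s hs).2.1) t ht.le)
  rw [d1] at W
  have B1 := J_dx (L := L) (fun x => (h.sθ.dx x t).mul (h.su.pdt.dx x t)) (by fun_prop)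
    (by simp [b.2.2.1]) (by simp [b.2.2.2])
  have B2 := J_dx (L := L) (fun x => (h.sθ.dx x t).mul (h.sq.dx x t)) (by fun_prop)
    (by simp [b.2.2.1]) (by simp [b.2.2.2])
  have E2 : J L (fun _ => 1) (fun x => θ x t * pdt θ x t) =
      J L (fun _ => 1) (fun x => (-κ) * (θ x t * pdx q x t) + (-η) * (θ x t * pdx (pdt u) x t)) :=
    J_congr hL fun x hx => by
      have := h.e2 x hx t ht
      rw [h.su.comm] at this
      linear_combination (θ x t) * this
  have E3 : J L (fun _ => 1) (fun x => τ * (q x t * pdt q x t)) =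
      J L (fun _ => 1) (fun x => (-β) * (q x t ^ 2) + (-κ) * (pdx θ x t * q x t)) :=
    J_congr hL fun x hx => by
      have := h.e3 x hx t ht
      linear_combination (q x t) * this
  rw [J_add hL w1 (by fun_prop) (by fun_prop)] at B1 B2 E2 E3
  simp only [J_smul] at E2 E3
  have s1 : J L δ (fun x => pdt (pdx u) x t * pdt (pdx u) x t)
    = J L δ (fun x => pdt (pdx u) x t ^ 2) := by congr 1; funext x; ring
  have s2 : J L m (fun x => pdt (pdt u) x t * pdt u x t)
    = J L m (fun x => pdt u x t * pdt (pdt u) x t) := by congr 1; funext x; ring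
  rw [s1, s2] at W
  unfold Di
  linear_combination W + E2 + E3 - η * B1 - κ * B2

lemma Gf_deriv {L η β κ τ : ℝ} {m δ p : ℝ → ℝ} {u θ q : ℝ → ℝ → ℝ} (hL : 0 < L)
    (hm : ContinuousOn m (Icc 0 L)) (hδ : ContinuousOn δ (Icc 0 L))
    (h : WS L η β κ τ m δ p u θ q) :
    (∀ t, 0 < t → HasDerivAt (Gf L m δ u) (J L m (fun x => pdt u x t ^ 2)
      - J L p (fun x => pdx u x t ^ 2) + η * J L (fun _ => 1) (fun x => θ x t * pdx u x t)) t) ∧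
      Continuous (Gf L m δ u) := by
  have w1 : ContinuousOn (fun _ : ℝ => (1 : ℝ)) (Icc 0 L) := continuousOn_const
  have D : ∀ t, HasDerivAt (Gf L m δ u) _ t := fun t =>
    (J_deriv hL hm (h.su.pdt.mul h.su) t).add (J_sq_deriv hL hδ h.su.pdx t)
  refine ⟨fun t ht => (D t).congr_deriv ?_, continuous_iff_continuousAt.2 fun t => (D t).continuousAt⟩
  have cθ := h.sθ.cont t
  have cu := h.su.cont t
  have cut := h.su.pdt.cont t
  have cutt := h.su.pdt.pdt.cont t
  have cθx := h.sθ.pdx.cont t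
  have cux := h.su.pdx.cont t
  have b := h.bc t ht.le
  have d1 : deriv (fun x => u x t) = fun x => pdx u x t := rfl
  have W := h.weak t ht (fun x => u x t) (h.su.slice t) b.1 b.2.1
  rw [d1] at W
  have B1 := J_dx (L := L) (fun x => (h.sθ.dx x t).mul (h.su.dx x t)) (by fun_prop)
    (by simp [b.2.2.1]) (by simp [b.2.2.2])
  rw [J_add hL w1 (by fun_prop) (by fun_prop)] at B1
  simp only [pdt_mul h.su.pdt h.su]
  rw [J_add hL hm (by fun_prop) (by fun_prop)]
  have s1 : J L p (fun x => pdx u x t * pdx u x t)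
    = J L p (fun x => pdx u x t ^ 2) := by congr 1; funext x; ring
  have s2 : J L m (fun x => pdt u x t * pdt u x t)
    = J L m (fun x => pdt u x t ^ 2) := by congr 1; funext x; ring
  have s3 : J L δ (fun x => pdt (pdx u) x t * pdx u x t)
    = J L δ (fun x => pdx u x t * pdt (pdx u) x t) := by congr 1; funext x; ring
  rw [s1, s3] at W
  rw [s2]
  linear_combination W - η * B1

lemma J_sq_nonneg {L : ℝ} (hL : 0 < L) {w : ℝ → ℝ} (h : ∀ x ∈ Icc 0 L, 0 < w x) (f : ℝ → ℝ) :
    0 ≤ J L w (fun x => f x ^ 2) :=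
  intervalIntegral.integral_nonneg hL.le fun x hx => mul_nonneg (h x hx).le (sq_nonneg _)

lemma J_le_up {L : ℝ} (hL : 0 < L) {w : ℝ → ℝ} {M : ℝ} (hw : ContinuousOn w (Icc 0 L))
    (h : ∀ x ∈ Icc 0 L, w x ≤ M) {f : ℝ → ℝ} (hf : Continuous f) :
    J L w (fun x => f x ^ 2) ≤ M * J L (fun _ => 1) (fun x => f x ^ 2) := by
  rw [← J_smul]
  apply J_mono hL hw continuousOn_const (by fun_prop) (by fun_prop)
  intro x hx
  nlinarith [h x hx, sq_nonneg (f x)]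

lemma J_le_low {L : ℝ} (hL : 0 < L) {w : ℝ → ℝ} {M : ℝ} (hw : ContinuousOn w (Icc 0 L))
    (h : ∀ x ∈ Icc 0 L, M ≤ w x) {f : ℝ → ℝ} (hf : Continuous f) :
    M * J L (fun _ => 1) (fun x => f x ^ 2) ≤ J L w (fun x => f x ^ 2) := by
  rw [← J_smul]
  apply J_mono hL continuousOn_const hw (by fun_prop) (by fun_prop)
  intro x hx
  nlinarith [h x hx, sq_nonneg (f x)]

lemma J_young {L : ℝ} (hL : 0 < L) {w : ℝ → ℝ} (hw : ContinuousOn w (Icc 0 L))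
    (h : ∀ x ∈ Icc 0 L, 0 < w x) {f g : ℝ → ℝ} (hf : Continuous f) (hg : Continuous g)
    {a b : ℝ} (ha : 0 < a) (hab : 1 ≤ 4 * a * b) :
    |J L w (fun x => f x * g x)| ≤ a * J L w (fun x => f x ^ 2) + b * J L w (fun x => g x ^ 2) := by
  have pt : ∀ y z : ℝ, y * z ≤ a * y ^ 2 + b * z ^ 2 := by
    intro y z
    have h1 : 0 ≤ (2 * a * y - z) ^ 2 := sq_nonneg _
    have h2 : 0 ≤ (4 * a * b - 1) * z ^ 2 := mul_nonneg (by linarith) (sq_nonneg _)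
    have : 0 ≤ 4 * a * (a * y ^ 2 + b * z ^ 2 - y * z) := by nlinarith
    have := nonneg_of_mul_nonneg_right this (by linarith)
    linarith
  rw [← J_smul, ← J_smul, ← J_add hL hw (by fun_prop) (by fun_prop), abs_le]
  constructor
  · have : J L w (fun x => (-1) * (f x * g x)) ≤
      J L w (fun x => a * f x ^ 2 + b * g x ^ 2) := by
      apply J_mono hL hw hw (by fun_prop) (by fun_prop)
      intro x hx
      apply mul_le_mul_of_nonneg_left _ (h x hx).le
      have := pt (-f x) (g x)
      linarith [this, neg_sq (f x)]
    rw [J_smul] at this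
    linarith
  · apply J_mono hL hw hw (by fun_prop) (by fun_prop)
    intro x hx
    exact mul_le_mul_of_nonneg_left (pt _ _) (h x hx).le

lemma En_nonneg {L τ : ℝ} {m p : ℝ → ℝ} {u θ q : ℝ → ℝ → ℝ} (hL : 0 < L) (hτ : 0 < τ)
    (hm : ∀ x ∈ Icc 0 L, 0 < m x) (hp : ∀ x ∈ Icc 0 L, 0 < p x) (t : ℝ) :
    0 ≤ En L τ m p u θ q t := by
  unfold En
  have h1 := J_sq_nonneg hL hp (fun x => pdx u x t)
  have h2 := J_sq_nonneg hL hm (fun x => pdt u x t)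
  have h3 := J_sq_nonneg hL (w := fun _ => 1) (fun _ _ => one_pos) (fun x => θ x t)
  have h4 := J_sq_nonneg hL (w := fun _ => 1) (fun _ _ => one_pos) (fun x => q x t)
  have := mul_nonneg hτ.le h4
  linarith

/-- The multiplier functional is controlled by the energy. -/
lemma Gf_bound {L η β κ τ : ℝ} {m δ p : ℝ → ℝ} {u θ q : ℝ → ℝ → ℝ} (hL : 0 < L) (hτ : 0 < τ)
    (hm : ContinuousOn m (Icc 0 L)) (hδ : ContinuousOn δ (Icc 0 L)) (hp : ContinuousOn p (Icc 0 L))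
    (pm : ∀ x ∈ Icc 0 L, 0 < m x) (pδ : ∀ x ∈ Icc 0 L, 0 < δ x)
    {M p0 δ1 : ℝ} (hM0 : 0 < M) (hp00 : 0 < p0) (hδ10 : 0 < δ1) (hM : ∀ x ∈ Icc 0 L, m x ≤ M)
    (hp0 : ∀ x ∈ Icc 0 L, p0 ≤ p x) (hδ1 : ∀ x ∈ Icc 0 L, δ x ≤ δ1)
    (h : WS L η β κ τ m δ p u θ q) (t : ℝ) (ht : 0 ≤ t) :
    |Gf L m δ u t| ≤ (1 + 4 * M * L ^ 2 / p0 + 2 * δ1 / p0) * En L τ m p u θ q t := by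
  have cu := h.su.cont t
  have cut := h.su.pdt.cont t
  have cux := h.su.pdx.cont t
  have b := h.bc t ht
  have y := J_young hL hm pm cut cu (a := 1 / 2) (b := 1 / 2) (by norm_num) (by norm_num)
  have h1 := J_le_up hL hm hM cu
  have h2 := poincare hL (fun x => h.su.dx x t) cu cux b.1
  have h3 := J_le_low hL hp hp0 cux
  have h4 := J_le_up hL hδ hδ1 cux
  have n1 := J_sq_nonneg hL pδ (fun x => pdx u x t)
  have n2 := J_sq_nonneg hL pm (fun x => pdt u x t)
  have n3 := J_sq_nonneg hL (w := fun _ => 1) (fun _ _ => one_pos) (fun x => θ x t)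
  have n4 := mul_nonneg hτ.le
    (J_sq_nonneg hL (w := fun _ => 1) (fun _ _ => one_pos) (fun x => q x t))
  have n5 := J_sq_nonneg hL (w := p) (fun x hx => hp00.trans_le (hp0 x hx)) (fun x => pdx u x t)
  unfold Gf En
  set A := J L (fun _ => 1) (fun x => pdx u x t ^ 2)
  set P := J L p (fun x => pdx u x t ^ 2)
  set U := J L m (fun x => pdt u x t ^ 2)
  set T := J L (fun _ => 1) (fun x => θ x t ^ 2)
  set Q := τ * J L (fun _ => 1) (fun x => q x t ^ 2)
  have hA : A ≤ P / p0 := by rw [le_div_iff₀ hp00]; linarith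
  have i1 : J L m (fun x => u x t ^ 2) ≤ (4 * M * L ^ 2 / p0) * P := by
    calc _ ≤ M * (4 * L ^ 2 * (P / p0)) := by
          refine h1.trans (mul_le_mul_of_nonneg_left (h2.trans ?_) hM0.le)
          exact mul_le_mul_of_nonneg_left hA (by positivity)
      _ = _ := by field_simp
  have i2 : J L δ (fun x => pdx u x t ^ 2) ≤ (δ1 / p0) * P := by
    calc _ ≤ δ1 * (P / p0) := h4.trans (mul_le_mul_of_nonneg_left hA hδ10.le)
      _ = _ := by field_simp
  have k1 : 0 ≤ 4 * M * L ^ 2 / p0 := by positivity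
  have k2 : 0 ≤ δ1 / p0 := by positivity
  have e2 : 2 * δ1 / p0 = 2 * (δ1 / p0) := by ring
  rw [e2]
  set c := 4 * M * L ^ 2 / p0
  set d := δ1 / p0
  have z1 : 0 ≤ c * (U + T + Q) := mul_nonneg k1 (by linarith)
  have z2 : 0 ≤ d * (U + T + Q) := mul_nonneg k2 (by linarith)
  rw [abs_le] at y ⊢
  constructor <;> nlinarith [y.1, y.2]

lemma dissip {L η β κ τ : ℝ} {m δ p : ℝ → ℝ} (hL : 0 < L) (hη : 0 < η) (hβ : 0 < β) (hκ : 0 < κ)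
    (hτ : 0 < τ)
    (hm : ContinuousOn m (Icc 0 L)) (hδ : ContinuousOn δ (Icc 0 L)) (hp : ContinuousOn p (Icc 0 L))
    {M p0 δ0 : ℝ} (hM0 : 0 < M) (hp00 : 0 < p0) (hδ00 : 0 < δ0) (hM : ∀ x ∈ Icc 0 L, m x ≤ M)
    (hp0 : ∀ x ∈ Icc 0 L, p0 ≤ p x) (hδ0 : ∀ x ∈ Icc 0 L, δ0 ≤ δ x) :
    ∃ N > 0, ∀ u θ q, WS L η β κ τ m δ p u θ q → ∀ t, 0 < t →
      (J L m (fun x => pdt u x t ^ 2)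
      - J L p (fun x => pdx u x t ^ 2) + η * J L (fun _ => 1) (fun x => θ x t * pdx u x t))
      + En L τ m p u θ q t ≤ N * (Di L β δ u q t + Di L β δ (pdt u) (pdt q) t) := by
  have w1 : ContinuousOn (fun _ : ℝ => (1 : ℝ)) (Icc 0 L) := continuousOn_const
  obtain ⟨c1, hc1⟩ : ∃ c, c = 4 * M * L ^ 2 / δ0 := ⟨_, rfl⟩
  obtain ⟨c2, hc2⟩ : ∃ c, c = 8 * L ^ 2 * τ ^ 2 / κ ^ 2 := ⟨_, rfl⟩
  obtain ⟨c3, hc3⟩ : ∃ c, c = 8 * L ^ 2 * β ^ 2 / κ ^ 2 := ⟨_, rfl⟩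
  obtain ⟨c4, hc4⟩ : ∃ c, c = η ^ 2 / (2 * p0) + 1 / 2 := ⟨_, rfl⟩
  have p1 : 0 < c1 := by rw [hc1]; positivity
  have p2 : 0 < c2 := by rw [hc2]; positivity
  have p3 : 0 < c3 := by rw [hc3]; positivity
  have p4 : 0 < c4 := by rw [hc4]; positivity
  obtain ⟨r, hr⟩ : ∃ c, c = (c4 * c2 + c4 * c3 + τ / 2) / β := ⟨_, rfl⟩
  have pr : 0 < r := by rw [hr]; positivity
  have hrβ : r * β = c4 * c2 + c4 * c3 + τ / 2 := by rw [hr]; field_simp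
  refine ⟨c1 + r, by positivity, fun u θ q h t ht => ?_⟩
  have cθ := h.sθ.cont t
  have cq := h.sq.cont t
  have cqt := h.sq.pdt.cont t
  have cut := h.su.pdt.cont t
  have cux := h.su.pdx.cont t
  have cθx := h.sθ.pdx.cont t
  have cuxt := h.su.pdx.pdt.cont t
  have b := h.bc t ht.le
  have b' := pdt_zero_of h.su (fun s hs => (h.bc s hs).1) t ht.le
  have hU1 := J_le_up hL hm hM cut
  have hU2 := poincare hL (f := fun x => pdt u x t) (f' := fun x => pdt (pdx u) x t)
    (fun x => by rw [h.su.comm]; exact h.su.pdt.dx x t) cut cuxt b'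
  have hU3 := J_le_low hL hδ hδ0 cuxt
  have hP := J_le_low hL hp hp0 cux
  have y := (abs_le.1 (J_young hL w1 (fun _ _ => one_pos) cθ cux (a := η / (2 * p0)) (b := p0 / (2 * η))
    (by positivity) (by apply le_of_eq; field_simp; norm_num))).2
  have hT := poincare hL (fun x => h.sθ.dx x t) cθ cθx b.2.2.1
  have hT2 : κ ^ 2 * J L (fun _ => 1) (fun x => pdx θ x t ^ 2) ≤
      2 * τ ^ 2 * J L (fun _ => 1) (fun x => pdt q x t ^ 2)
      + 2 * β ^ 2 * J L (fun _ => 1) (fun x => q x t ^ 2) := by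
    rw [← J_smul, ← J_smul, ← J_smul, ← J_add hL w1 (by fun_prop) (by fun_prop),
      J_congr hL (f := fun x => κ ^ 2 * pdx θ x t ^ 2)
        (g := fun x => (τ * pdt q x t + β * q x t) ^ 2) (fun x hx => by
          have e : κ * pdx θ x t = -(τ * pdt q x t + β * q x t) := by
            linear_combination h.e3 x hx t ht
          rw [← mul_pow, e, neg_sq])]
    apply J_mono hL w1 w1 (by fun_prop) (by fun_prop)
    intro x hx
    nlinarith [sq_nonneg (τ * pdt q x t - β * q x t)]
  have nS := J_sq_nonneg hL (w := δ) (fun x hx => hδ00.trans_le (hδ0 x hx)) (fun x => pdt (pdx u) x t)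
  have nS1 := J_sq_nonneg hL (w := δ) (fun x hx => hδ00.trans_le (hδ0 x hx))
    (fun x => pdt (pdx (pdt u)) x t)
  have nQ := J_sq_nonneg hL (w := fun _ => 1) (fun _ _ => one_pos) (fun x => q x t)
  have nR := J_sq_nonneg hL (w := fun _ => 1) (fun _ _ => one_pos) (fun x => pdt q x t)
  unfold En Di
  set A := J L (fun _ => 1) (fun x => pdx u x t ^ 2)
  set P := J L p (fun x => pdx u x t ^ 2)
  set U := J L m (fun x => pdt u x t ^ 2)
  set T := J L (fun _ => 1) (fun x => θ x t ^ 2)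
  set Q := J L (fun _ => 1) (fun x => q x t ^ 2)
  set R := J L (fun _ => 1) (fun x => pdt q x t ^ 2)
  set S := J L δ (fun x => pdt (pdx u) x t ^ 2)
  set S1 := J L δ (fun x => pdt (pdx (pdt u)) x t ^ 2)
  set X := J L (fun _ => 1) (fun x => θ x t * pdx u x t)
  set V := J L (fun _ => 1) (fun x => pdt (pdx u) x t ^ 2)
  set Z := J L (fun _ => 1) (fun x => pdx θ x t ^ 2)
  have iU : U ≤ c1 * S := by
    have hV : V ≤ S / δ0 := by rw [le_div_iff₀ hδ00]; linarith
    calc U ≤ M * (4 * L ^ 2 * (S / δ0)) :=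
          hU1.trans (mul_le_mul_of_nonneg_left
            (hU2.trans (mul_le_mul_of_nonneg_left hV (by positivity))) hM0.le)
      _ = c1 * S := by rw [hc1]; field_simp
  have iX : η * X ≤ η ^ 2 / (2 * p0) * T + 1 / 2 * P := by
    calc η * X ≤ η * (η / (2 * p0) * T + p0 / (2 * η) * A) := mul_le_mul_of_nonneg_left y hη.le
      _ = η ^ 2 / (2 * p0) * T + 1 / 2 * (p0 * A) := by field_simp
      _ ≤ _ := by linarith
  have iT : T ≤ c2 * R + c3 * Q := by
    have hZ : Z ≤ (2 * τ ^ 2 * R + 2 * β ^ 2 * Q) / κ ^ 2 := by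
      rw [le_div_iff₀ (by positivity)]; linarith
    calc T ≤ 4 * L ^ 2 * ((2 * τ ^ 2 * R + 2 * β ^ 2 * Q) / κ ^ 2) :=
          hT.trans (mul_le_mul_of_nonneg_left hZ (by positivity))
      _ = c2 * R + c3 * Q := by rw [hc2, hc3]; field_simp; ring
  have iT4 : c4 * T ≤ c4 * (c2 * R + c3 * Q) := mul_le_mul_of_nonneg_left iT p4.le
  have g1 : U - P + η * X + 1 / 2 * (P + U + T + τ * Q) ≤ 3 / 2 * U + c4 * T + τ / 2 * Q := by
    have : c4 * T = η ^ 2 / (2 * p0) * T + 1 / 2 * T := by rw [hc4]; ring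
    linarith
  have g2 : (c1 + r) * (2 * S + β * Q + (2 * S1 + β * R)) =
      2 * c1 * S + (2 * r * S + 2 * (c1 + r) * S1 + c1 * β * (Q + R))
      + (c4 * c2 + c4 * c3 + τ / 2) * (Q + R) := by
    rw [← hrβ]; ring
  rw [g2]
  have f1 : 0 ≤ 2 * r * S + 2 * (c1 + r) * S1 + c1 * β * (Q + R) := by positivity
  have f2 : 0 ≤ c4 * c2 * Q + c4 * c3 * R + τ / 2 * R := by positivity
  have f3 : 0 ≤ c1 * S := by positivity
  linarith

/-- Polynomial decay of the energies of every order. -/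
theorem polynomial_decay_higher_energy
    (L η β κ τ : ℝ) (hL : 0 < L) (hη : 0 < η) (hβ : 0 < β) (hκ : 0 < κ) (hτ : 0 < τ)
    (m δ p : ℝ → ℝ)
    (hmLip : ∃ K, LipschitzOnWith K m (Icc 0 L))
    (hδLip : ∃ K, LipschitzOnWith K δ (Icc 0 L))
    (hpLip : ∃ K, LipschitzOnWith K p (Icc 0 L))
    (hmpos : ∀ x ∈ Icc (0 : ℝ) L, 0 < m x)
    (hδpos : ∀ x ∈ Icc (0 : ℝ) L, 0 < δ x)
    (hppos : ∀ x ∈ Icc (0 : ℝ) L, 0 < p x)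
    :
    ∃ C > (0 : ℝ),
      ∀ k : ℕ, ∀ u θ q : ℝ → ℝ → ℝ,
        IsSmoothSol L η β κ τ m δ p u θ q → BCD L u θ →
          ∀ t : ℝ, 0 < t →
            energyN k L τ m p u θ q t
              ≤ C * (energyN k L τ m p u θ q 0 + energyN (k + 1) L τ m p u θ q 0) / t := by
  have hm := hmLip.choose_spec.continuousOn
  have hδ := hδLip.choose_spec.continuousOn
  have hp := hpLip.choose_spec.continuousOn
  have hne : (Icc (0 : ℝ) L).Nonempty := ⟨0, le_refl _, hL.le⟩
  obtain ⟨xm, hxm, hM⟩ := isCompact_Icc.exists_isMaxOn hne hm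
  obtain ⟨xd, hxd, hδ1⟩ := isCompact_Icc.exists_isMaxOn hne hδ
  obtain ⟨xe, hxe, hδ0⟩ := isCompact_Icc.exists_isMinOn hne hδ
  obtain ⟨xp, hxp, hp0⟩ := isCompact_Icc.exists_isMinOn hne hp
  obtain ⟨N, hN, hdis⟩ := dissip hL hη hβ hκ hτ hm hδ hp (hmpos xm hxm) (hppos xp hxp)
    (hδpos xe hxe) (fun x hx => hM hx) (fun x hx => hp0 hx) (fun x hx => hδ0 hx)
  have hGb := fun {u θ q : ℝ → ℝ → ℝ} (h : WS L η β κ τ m δ p u θ q) =>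
    Gf_bound hL hτ hm hδ hp hmpos hδpos (hmpos xm hxm) (hppos xp hxp)
    (hδpos xd hxd) (fun x hx => hM hx) (fun x hx => hp0 hx) (fun x hx => hδ1 hx) h
  obtain ⟨K, hK⟩ : ∃ K, K = 1 + 4 * m xm * L ^ 2 / p xp + 2 * δ xd / p xp := ⟨_, rfl⟩
  rw [← hK] at hGb
  have hK0 : 0 < K := by
    have := hmpos xm hxm
    have := hppos xp hxp
    have := hδpos xd hxd
    rw [hK]; positivity
  refine ⟨N + 2 * K, by positivity, ?_⟩
  intro k u θ q hsol hb t ht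
  have hW := (WS.of_sol hL hmLip hδLip hpLip hsol hb).pdtn hL hm hδ hp k
  rw [energyN_eq hsol.1, energyN_eq hsol.1, energyN_eq hsol.1, pdtn_succ, pdtn_succ, pdtn_succ]
  generalize pdtn k u = U at hW ⊢
  generalize pdtn k θ = Θ at hW ⊢
  generalize pdtn k q = Q at hW ⊢
  have hW1 := hW.dt hL hm hδ hp
  obtain ⟨dE, cE⟩ := En_deriv hL hm hδ hp hW
  obtain ⟨dF, cF⟩ := En_deriv hL hm hδ hp hW1
  obtain ⟨dG, cG⟩ := Gf_deriv hL hm hδ hW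
  have hE0 := fun s => En_nonneg (u := U) (θ := Θ) (q := Q) hL hτ hmpos hppos s
  have hF0 := fun s => En_nonneg (u := pdt U) (θ := pdt Θ) (q := pdt Q) hL hτ hmpos hppos s
  have hD0 : ∀ s, 0 ≤ Di L β δ U Q s := fun s => by
    have n1 := J_sq_nonneg hL hδpos (fun x => pdt (pdx U) x s)
    have n2 := J_sq_nonneg hL (w := fun _ => 1) (fun _ _ => one_pos) (fun x => Q x s)
    unfold Di; positivity
  have hdis' := hdis U Θ Q hW
  have hG := fun s hs => abs_le.1 (hGb hW s hs)
  generalize En L τ m p U Θ Q = E at *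
  generalize En L τ m p (pdt U) (pdt Θ) (pdt Q) = F at *
  generalize Gf L m δ U = G at *
  have dΨ : ∀ s, 0 < s → HasDerivAt (fun s => (N * (E s + F s) + G s) + K * E s + s * E s) _ s :=
    fun s hs => (((((dE s hs).add (dF s hs)).const_mul N).add (dG s hs)).add
      ((dE s hs).const_mul K)).add ((hasDerivAt_id s).mul (dE s hs))
  have anti : AntitoneOn (fun s => (N * (E s + F s) + G s) + K * E s + s * E s) (Ici 0) := by
    apply antitoneOn_of_deriv_nonpos (convex_Ici 0)
    · exact Continuous.continuousOn (by fun_prop)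
    · intro s hs
      rw [interior_Ici] at hs
      exact (dΨ s hs).differentiableAt.differentiableWithinAt
    · intro s hs
      rw [interior_Ici] at hs
      rw [(dΨ s hs).deriv]
      have h1 := hdis' s hs
      have h2 := mul_nonneg hK0.le (hD0 s)
      have h3 := mul_nonneg (le_of_lt hs) (hD0 s)
      simp only [id]
      linarith
  have h0 := anti (mem_Ici.2 le_rfl) (mem_Ici.2 ht.le) ht.le
  simp only [zero_mul, add_zero] at h0
  have g0 := (hG 0 le_rfl).2
  have gt := (hG t ht.le).1
  rw [le_div_iff₀ ht]
  have z1 := mul_nonneg hN.le (add_nonneg (hE0 t) (hF0 t))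
  have z2 := mul_nonneg hK0.le (hF0 0)
  linarith
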